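/- arXiv:1805.11173 — 2 statements merged into one kernel-verified Lean document; each statement's English description precedes it below -/
import Mathlib

section
/- Let B ⊆ A be a non-degenerate C*-inclusion and let Φ be a set of states of B such that every φ ∈ Φ admits a unique extension σ_φ to a state of A. If the family Σ = {σ_φ}_{φ∈Φ} is jointly essentially faithful (i.e. ⋂_{φ∈Φ} K_{σ_φ} = {0}), then the inclusion B ⊆ A is essential: the only closed two-sided ideal L ⊊ A with B ∩ L = {0} is L = {0}. -/
open scoped ComplexOrder

/-- A state on a (subset of a) C*-algebra: a linear functional which is positive
(equivalently, `0 ≤ φ (star a * a)` for all `a`) and has norm one. -/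
def IsState {E : Type*} [SeminormedAddCommGroup E] [NormedSpace ℂ E] [Mul E] [Star E]
    (φ : E →L[ℂ] ℂ) : Prop :=
  (∀ a : E, 0 ≤ φ (star a * a)) ∧ ‖φ‖ = 1

/-- `K_ψ = {a | ψ (x * a * y) = 0 for all x, y}`, the largest (closed) two-sided ideal on which
the positive map `ψ` vanishes. -/
def Kset {E F : Type*} [Mul E] [Zero F] (ψ : E → F) : Set E :=
  {a | ∀ x y : E, ψ (x * a * y) = 0}

/-- Non-degeneracy of the inclusion `Bs ⊆ A`: the closed linear span of `{b * a}` is all of `A`. -/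
def NondegSet {A : Type*} [NonUnitalCStarAlgebra A] (Bs : Set A) : Prop :=
  closure (Submodule.span ℂ {x : A | ∃ b ∈ Bs, ∃ a : A, x = b * a} : Set A) = Set.univ

/-- The inclusion `Bs ⊆ A` is essential: the only closed two-sided ideal `L ⊊ A` with
`Bs ∩ L = {0}` is `L = {0}`. -/
def EssentialIncl {A : Type*} [NonUnitalCStarAlgebra A] (Bs : Set A) : Prop :=
  ∀ L : TwoSidedIdeal A, IsClosed (L : Set A) → (L : Set A) ≠ Set.univ →
    Bs ∩ (L : Set A) = {0} → (L : Set A) = {0}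

/-!
A state `φ ∈ Φ` is extended to `A` in such a way that it vanishes on a closed ideal `L` with
`B ∩ L = {0}`. On the pullback `A ×_{A ⧸ L} B` it lives as `φ ∘ snd`, and the first projection of
the pullback to `A` is an injective, hence isometric, star homomorphism. A Hahn–Banach extension
along it is positive because its norm is still attained in the limit along an approximate unit of
the pullback. It agrees with `φ` on `B`, since `(b, b)` lies in the pullback, and kills `x ∈ L`,
since `(x, 0)` does. Uniqueness identifies it with `σ φ`, so `L` is contained in every `Kset (σ φ)`.
-/

open Filter Topology
open scoped CStarAlgebra

section CStarRing

variable {R : Type*} [NonUnitalNormedRing R] [StarRing R] [CStarRing R]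

theorem norm_sub_mul_sq_le {e z : R} (he : IsSelfAdjoint e) (he_norm : ‖e‖ ≤ 1) :
    ‖z - e * z‖ ^ 2 ≤ 2 * ‖z * star z - e * (z * star z)‖ := by
  set w := z * star z - e * (z * star z)
  have h_expand : (z - e * z) * star (z - e * z) = w - w * e := by
    simp only [w, star_sub, star_mul, he.star_eq]
    noncomm_ring
  calc ‖z - e * z‖ ^ 2 = ‖w - w * e‖ := by
        rw [sq, ← CStarRing.norm_self_mul_star, h_expand]
    _ ≤ ‖w‖ + ‖w‖ * ‖e‖ := (norm_sub_le _ _).trans (by gcongr; exact norm_mul_le _ _)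
    _ ≤ 2 * ‖w‖ := by nlinarith [norm_nonneg w]

theorem tendsto_mul_of_tendsto_mul_mul_star {l : Filter R} {z : R}
    (h_sa : ∀ᶠ e in l, IsSelfAdjoint e) (h_norm : ∀ᶠ e in l, ‖e‖ ≤ 1)
    (h : Tendsto (· * (z * star z)) l (𝓝 (z * star z))) : Tendsto (· * z) l (𝓝 z) := by
  rw [tendsto_iff_norm_sub_tendsto_zero] at h ⊢
  have h_sq : Tendsto (fun e ↦ ‖e * z - z‖ ^ 2) l (𝓝 0) := by
    refine squeeze_zero' (.of_forall fun _ ↦ sq_nonneg _) ?_ (by simpa using h.const_mul 2)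
    filter_upwards [h_sa, h_norm] with e he he_norm
    simpa only [norm_sub_rev] using norm_sub_mul_sq_le (z := z) he he_norm
  simpa using h_sq.sqrt

end CStarRing

section Ideals

variable {A : Type*} [NonUnitalCStarAlgebra A]

theorem smul_mem_of_isClosed_ideal {L : TwoSidedIdeal A} (hL : IsClosed (L : Set A)) (c : ℂ) {x : A}
    (hx : x ∈ L) : c • x ∈ L := by
  let _ := CStarAlgebra.spectralOrder A
  have _ := CStarAlgebra.spectralOrderedRing A
  have h_lim : Tendsto (fun e ↦ c • (e * x)) (CStarAlgebra.approximateUnit A) (𝓝 (c • x)) :=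
    ((CStarAlgebra.increasingApproximateUnit A).tendsto_mul_right x).const_smul c
  refine hL.mem_of_tendsto h_lim (.of_forall fun e ↦ ?_)
  rw [← smul_mul_assoc]
  exact L.mul_mem_left _ _ hx

/-- The largest self-adjoint part `L ∩ L*` of a closed two-sided ideal `L`, as a star subalgebra.
It serves to show that `L` itself is self-adjoint. -/
def starCore (L : TwoSidedIdeal A) (hL : IsClosed (L : Set A)) : NonUnitalStarSubalgebra ℂ A where
  carrier := {x | x ∈ L ∧ star x ∈ L}
  add_mem' hx hy := ⟨L.add_mem hx.1 hy.1, star_add (R := A) _ _ ▸ L.add_mem hx.2 hy.2⟩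
  zero_mem' := ⟨L.zero_mem, (star_zero A).symm ▸ L.zero_mem⟩
  mul_mem' hx hy :=
    ⟨L.mul_mem_left _ _ hy.1, star_mul (R := A) _ _ ▸ L.mul_mem_left _ _ hx.2⟩
  smul_mem' c x hx :=
    ⟨smul_mem_of_isClosed_ideal hL c hx.1, star_smul c x ▸ smul_mem_of_isClosed_ideal hL _ hx.2⟩
  star_mem' hx := ⟨hx.2, (star_star (_ : A)).symm ▸ hx.1⟩

theorem isClosed_starCore (L : TwoSidedIdeal A) (hL : IsClosed (L : Set A)) :
    IsClosed (starCore L hL : Set A) :=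
  hL.inter (hL.preimage continuous_star)

theorem star_mem_of_isClosed_ideal {L : TwoSidedIdeal A} (hL : IsClosed (L : Set A)) {x : A}
    (hx : x ∈ L) : star x ∈ L := by
  have _ := isClosed_starCore L hL
  let _ := CStarAlgebra.spectralOrder (starCore L hL)
  have _ := CStarAlgebra.spectralOrderedRing (starCore L hL)
  have h_unit := CStarAlgebra.increasingApproximateUnit (starCore L hL)
  have := h_unit.neBot
  have h_mem : star x * star (star x) ∈ starCore L hL := by
    rw [star_star]
    exact ⟨L.mul_mem_left _ _ hx, by simpa using L.mul_mem_left _ _ hx⟩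
  have h_lim : Tendsto (· * star x) (map Subtype.val (CStarAlgebra.approximateUnit (starCore L hL)))
      (𝓝 (star x)) := by
    refine tendsto_mul_of_tendsto_mul_mul_star ?_ ?_ ?_
    · exact h_unit.eventually_isSelfAdjoint.mono fun e he ↦ congrArg Subtype.val he
    · exact h_unit.eventually_norm
    · exact (continuous_subtype_val.tendsto _).comp (h_unit.tendsto_mul_right ⟨_, h_mem⟩)
  rw [tendsto_map'_iff] at h_lim
  exact hL.mem_of_tendsto h_lim (.of_forall fun e ↦ L.mul_mem_right _ _ e.2.1)

end Ideals

/-- Positive linear functionals, in the encoding used by `IsState`. Mathlib's `A →ₚ[ℂ] ℂ` would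
require an order on `A`. -/
def IsPositiveFunctional {E : Type*} [SeminormedAddCommGroup E] [NormedSpace ℂ E] [Mul E] [Star E]
    (φ : E →L[ℂ] ℂ) : Prop :=
  ∀ a : E, 0 ≤ φ (star a * a)

section Approximation

variable {A : Type*} [NonUnitalCStarAlgebra A] [PartialOrder A] [StarOrderedRing A]

theorem norm_map_star_mul_sq_le (f : A →ₚ[ℂ] ℂ) (a b : A) :
    ‖f (star a * b)‖ ^ 2 ≤ (f (star a * a)).re * (f (star b * b)).re := by
  have h_norm_sq (x : A) : ‖f.toPreGNS x‖ ^ 2 = (f (star x * x)).re :=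
    congrArg Complex.re <| (Complex.ofReal_pow _ _).trans (f.preGNS_norm_sq (f.toPreGNS x))
  rw [← h_norm_sq, ← h_norm_sq, ← mul_pow]
  gcongr
  exact norm_inner_le_norm (𝕜 := ℂ) (f.toPreGNS a) (f.toPreGNS b)

namespace IsPositiveFunctional

variable {φ : A →L[ℂ] ℂ}

theorem map_nonneg (hφ : IsPositiveFunctional φ) {a : A} (ha : 0 ≤ a) : 0 ≤ φ a := by
  obtain ⟨s, rfl⟩ := CStarAlgebra.nonneg_iff_eq_star_mul_self.1 ha
  exact hφ s

theorem norm_map_mul_sq_le (hφ : IsPositiveFunctional φ) {e : A} (he : 0 ≤ e) (x : A) :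
    ‖φ (e * x)‖ ^ 2 ≤ (φ e).re * (‖φ‖ * (‖e‖ * ‖x‖ ^ 2)) := by
  obtain ⟨s, rfl⟩ := CStarAlgebra.nonneg_iff_eq_star_mul_self.1 he
  let f : A →ₚ[ℂ] ℂ := .mk₀ φ.toLinearMap fun _ ↦ hφ.map_nonneg
  calc ‖φ (star s * s * x)‖ ^ 2 = ‖f (star s * (s * x))‖ ^ 2 := by rw [mul_assoc]; rfl
    _ ≤ (φ (star s * s)).re * (φ (star (s * x) * (s * x))).re := norm_map_star_mul_sq_le f s (s * x)
    _ ≤ (φ (star s * s)).re * (‖φ‖ * (‖star s * s‖ * ‖x‖ ^ 2)) := by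
      gcongr
      · exact (Complex.nonneg_iff.1 (hφ s)).1
      · calc (φ (star (s * x) * (s * x))).re ≤ ‖φ‖ * ‖star (s * x) * (s * x)‖ :=
              (Complex.re_le_norm _).trans (φ.le_opNorm _)
          _ ≤ ‖φ‖ * (‖star s * s‖ * ‖x‖ ^ 2) := by
            rw [CStarRing.norm_star_mul_self, CStarRing.norm_star_mul_self, ← sq, ← sq, ← mul_pow]
            gcongr
            exact norm_mul_le _ _

theorem tendsto_norm (hφ : IsPositiveFunctional φ) {l : Filter A}
    (hl : l.IsIncreasingApproximateUnit) : Tendsto φ l (𝓝 (‖φ‖ : ℂ)) := by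
  suffices h_re : Tendsto (fun e ↦ (φ e).re) l (𝓝 ‖φ‖) by
    refine ((Complex.continuous_ofReal.tendsto _).comp h_re).congr' ?_
    filter_upwards [hl.eventually_nonneg] with e he
    exact (Complex.eq_re_of_ofReal_le (hφ.map_nonneg he)).symm
  refine tendsto_order.2 ⟨fun c hc ↦ ?_, fun c hc ↦ ?_⟩
  · obtain hc₀ | hc₀ := lt_or_ge c 0
    · filter_upwards [hl.eventually_nonneg] with e he
      exact hc₀.trans_le (Complex.nonneg_iff.1 (hφ.map_nonneg he)).1
    have h_sqrt : √(c * ‖φ‖) < ‖φ‖ := by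
      rw [Real.sqrt_lt' (hc₀.trans_lt hc), sq]
      gcongr
      exact hc₀.trans_lt hc
    obtain ⟨x, hx_norm, hx⟩ := φ.exists_lt_apply_of_lt_opNorm h_sqrt
    have h_lim : Tendsto (fun e ↦ ‖φ (e * x)‖) l (𝓝 ‖φ x‖) :=
      ((φ.continuous.tendsto x).comp (hl.tendsto_mul_right x)).norm
    filter_upwards [hl.eventually_nonneg, hl.eventually_norm, h_lim.eventually_const_lt hx]
      with e he he_norm hex
    have h_lt : c * ‖φ‖ < (φ e).re * ‖φ‖ := calc
      c * ‖φ‖ < ‖φ (e * x)‖ ^ 2 := Real.lt_sq_of_sqrt_lt hex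
      _ ≤ (φ e).re * (‖φ‖ * (‖e‖ * ‖x‖ ^ 2)) := hφ.norm_map_mul_sq_le he x
      _ ≤ (φ e).re * (‖φ‖ * (1 * 1 ^ 2)) := by
        have := (Complex.nonneg_iff.1 (hφ.map_nonneg he)).1
        gcongr
      _ = (φ e).re * ‖φ‖ := by ring
    exact lt_of_mul_lt_mul_right h_lt (norm_nonneg φ)
  · filter_upwards [hl.eventually_norm] with e he_norm
    calc (φ e).re ≤ ‖φ‖ * ‖e‖ := (Complex.re_le_norm _).trans (φ.le_opNorm e)
      _ ≤ ‖φ‖ := mul_le_of_le_one_right (norm_nonneg _) he_norm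
      _ < c := hc

end IsPositiveFunctional

end Approximation

section Unital

variable {U : Type*} [CStarAlgebra U]

theorem norm_add_algebraMap_mul_I_sq_le {h : U} (hh : IsSelfAdjoint h) (t : ℝ) :
    ‖h + algebraMap ℂ U (t * Complex.I)‖ ^ 2 ≤ ‖h‖ ^ 2 + t ^ 2 := by
  obtain _ | _ := subsingleton_or_nontrivial U
  · rw [Subsingleton.elim (h + _) 0, norm_zero]
    nlinarith [sq_nonneg ‖h‖, sq_nonneg t]
  have h_expand : star (h + algebraMap ℂ U (t * Complex.I)) * (h + algebraMap ℂ U (t * Complex.I))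
      = h * h + algebraMap ℂ U (t ^ 2) := by
    have h_star : star (algebraMap ℂ U (t * Complex.I)) = -algebraMap ℂ U (t * Complex.I) := by
      rw [← algebraMap_star_comm, ← map_neg]
      simp
    have h_comm : algebraMap ℂ U (t * Complex.I) * h = h * algebraMap ℂ U (t * Complex.I) :=
      Algebra.commutes _ _
    have h_sq : algebraMap ℂ U (t * Complex.I) * algebraMap ℂ U (t * Complex.I) =
        -algebraMap ℂ U (t ^ 2) := by
      rw [← map_mul, ← map_neg, mul_mul_mul_comm, Complex.I_mul_I, mul_neg_one, sq]
    rw [star_add, hh.star_eq, h_star, add_mul, mul_add, mul_add, neg_mul, neg_mul, h_comm, h_sq]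
    abel
  calc ‖h + algebraMap ℂ U (t * Complex.I)‖ ^ 2 = ‖h * h + algebraMap ℂ U (t ^ 2)‖ := by
        rw [sq, ← CStarRing.norm_star_mul_self, h_expand]
    _ ≤ ‖h‖ * ‖h‖ + ‖algebraMap ℂ U (t ^ 2)‖ :=
        (norm_add_le _ _).trans (by gcongr; exact norm_mul_le _ _)
    _ = ‖h‖ ^ 2 + t ^ 2 := by
        rw [norm_algebraMap', norm_pow, Complex.norm_real, Real.norm_eq_abs, sq_abs, ← sq]

theorem im_map_eq_zero_of_map_one {F : U →L[ℂ] ℂ} (hF : F 1 = ‖F‖) {h : U} (hh : IsSelfAdjoint h) :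
    (F h).im = 0 := by
  have h_im_le (t : ℝ) : ((F h).im + t * ‖F‖) ^ 2 ≤ ‖F‖ ^ 2 * (‖h‖ ^ 2 + t ^ 2) := calc
    ((F h).im + t * ‖F‖) ^ 2 = (F (h + algebraMap ℂ U (t * Complex.I))).im ^ 2 := by
      simp [Algebra.algebraMap_eq_smul_one, hF]
    _ ≤ ‖F (h + algebraMap ℂ U (t * Complex.I))‖ ^ 2 :=
      sq_le_sq.2 <| (Complex.abs_im_le_norm _).trans (le_abs_self _)
    _ ≤ (‖F‖ * ‖h + algebraMap ℂ U (t * Complex.I)‖) ^ 2 := by gcongr; exact F.le_opNorm _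
    _ ≤ ‖F‖ ^ 2 * (‖h‖ ^ 2 + t ^ 2) := by
      rw [mul_pow]
      gcongr
      exact norm_add_algebraMap_mul_I_sq_le hh t
  by_contra h_im
  -- This value of `t` makes the cross term on the left cancel the excess `‖F‖ ^ 2 * ‖h‖ ^ 2`.
  have h_cross : 2 * (F h).im * (‖F‖ * ‖h‖ ^ 2 / (2 * (F h).im) * ‖F‖) = ‖F‖ ^ 2 * ‖h‖ ^ 2 := by
    field_simp
  nlinarith [h_im_le (‖F‖ * ‖h‖ ^ 2 / (2 * (F h).im)), sq_pos_of_ne_zero h_im]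

theorem isPositiveFunctional_of_map_one {F : U →L[ℂ] ℂ} (hF : F 1 = ‖F‖) :
    IsPositiveFunctional F := by
  intro a
  let _ := CStarAlgebra.spectralOrder U
  have _ := CStarAlgebra.spectralOrderedRing U
  set y := star a * a
  have hy_nonneg : 0 ≤ y := star_mul_self_nonneg a
  have h_le : y ≤ algebraMap ℝ U ‖y‖ := IsSelfAdjoint.le_algebraMap_norm_self (.star_mul_self a)
  have h_norm : ‖algebraMap ℝ U ‖y‖ - y‖ ≤ ‖y‖ :=
    (CStarAlgebra.norm_le_iff_le_algebraMap _ (norm_nonneg y) (sub_nonneg.2 h_le)).2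
      (sub_le_self _ hy_nonneg)
  have h_re : ‖F‖ * ‖y‖ - (F y).re ≤ ‖F‖ * ‖y‖ := calc
    ‖F‖ * ‖y‖ - (F y).re = (F (algebraMap ℝ U ‖y‖ - y)).re := by
      rw [Algebra.algebraMap_eq_smul_one, ← Complex.coe_smul, map_sub, map_smul, hF, smul_eq_mul,
        ← Complex.ofReal_mul, Complex.sub_re, Complex.ofReal_re, mul_comm]
    _ ≤ ‖F‖ * ‖algebraMap ℝ U ‖y‖ - y‖ := (Complex.re_le_norm _).trans (F.le_opNorm _)
    _ ≤ ‖F‖ * ‖y‖ := by gcongr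
  exact Complex.nonneg_iff.2 ⟨by linarith, (im_map_eq_zero_of_map_one hF (.star_mul_self a)).symm⟩

theorem norm_two_smul_sub_one_le [PartialOrder U] [StarOrderedRing U] {u : U}
    (hu : u ∈ Set.Icc 0 1) : ‖2 • u - 1‖ ≤ 1 := by
  have h_sa : IsSelfAdjoint (2 • u - 1) :=
    .sub (.smul (.all 2) (.of_nonneg hu.1)) (.one U)
  have h_sq : star (2 • u - 1) * (2 • u - 1) ≤ 1 := by
    have h_le : u ^ 2 ≤ u := by simpa using CStarAlgebra.pow_antitone hu.1 hu.2 one_le_two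
    calc star (2 • u - 1) * (2 • u - 1) = 1 - 4 • (u - u ^ 2) := by
          rw [h_sa.star_eq]
          noncomm_ring
      _ ≤ 1 := sub_le_self _ (nsmul_nonneg (sub_nonneg.2 h_le) 4)
  rw [← CStarAlgebra.norm_le_one_iff_of_nonneg _ (star_mul_self_nonneg _),
    CStarRing.norm_star_mul_self] at h_sq
  nlinarith [norm_nonneg (2 • u - 1)]

end Unital

theorem eq_ofReal_of_norm_le_of_norm_two_mul_sub_le {z : ℂ} {r : ℝ} (hz : ‖z‖ ≤ r)
    (hz' : ‖2 * r - z‖ ≤ r) : z = r := by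
  have h_re : r ≤ z.re := by
    have h_two : 2 * r - z.re ≤ r := by simpa using (Complex.re_le_norm _).trans hz'
    linarith
  have h_norm : z.re = ‖z‖ := le_antisymm (Complex.re_le_norm z) (hz.trans h_re)
  have h_real : z = z.re := Complex.eq_re_of_ofReal_le (Complex.re_eq_norm.1 h_norm)
  rw [h_real, le_antisymm (h_norm.trans_le hz) h_re]

theorem exists_extension_norm_eq_of_linearIsometry {𝕜 E F : Type*} [RCLike 𝕜]
    [NormedAddCommGroup E] [NormedSpace 𝕜 E] [NormedAddCommGroup F] [NormedSpace 𝕜 F]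
    (ι : E →ₗᵢ[𝕜] F) (f : E →L[𝕜] 𝕜) : ∃ g : F →L[𝕜] 𝕜, (∀ x, g (ι x) = f x) ∧ ‖g‖ = ‖f‖ := by
  let e : LinearMap.range ι.toLinearMap ≃ₗᵢ[𝕜] E := ι.equivRange.symm
  obtain ⟨g, hg, hg_norm⟩ := exists_extension_norm_eq (LinearMap.range ι.toLinearMap)
    (f ∘L e.toContinuousLinearEquiv.toContinuousLinearMap)
  refine ⟨g, fun x ↦ ?_, hg_norm.trans (f.opNorm_comp_linearIsometryEquiv e)⟩
  exact (hg (ι.equivRange x)).trans (congrArg f (ι.equivRange.symm_apply_apply x))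

section Extension

variable {A : Type*} [NonUnitalCStarAlgebra A]

theorem isPositiveFunctional_of_tendsto_norm [PartialOrder A] [StarOrderedRing A]
    {f : A →L[ℂ] ℂ} {l : Filter A} [l.NeBot]
    (h_nonneg : ∀ᶠ e in l, 0 ≤ e) (h_norm : ∀ᶠ e in l, ‖e‖ ≤ 1) (h : Tendsto f l (𝓝 (‖f‖ : ℂ))) :
    IsPositiveFunctional f := by
  let ι : A →ₗᵢ[ℂ] A⁺¹ := ⟨Unitization.inrHom ℂ ℂ A, Unitization.norm_inr⟩
  obtain ⟨F, hF, hF_norm⟩ := exists_extension_norm_eq_of_linearIsometry ι f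
  have hF_one : F 1 = ‖F‖ := by
    refine eq_ofReal_of_norm_le_of_norm_two_mul_sub_le (by simpa using F.le_opNorm 1) ?_
    have h_lim : Tendsto (fun e ↦ ‖2 * f e - F 1‖) l (𝓝 ‖2 * (‖F‖ : ℂ) - F 1‖) := by
      rw [hF_norm]
      exact ((h.const_mul 2).sub_const _).norm
    refine le_of_tendsto h_lim ?_
    filter_upwards [h_nonneg, h_norm] with e he he_norm
    calc ‖2 * f e - F 1‖ = ‖F (2 • ι e - 1)‖ := by
          rw [map_sub, map_nsmul, hF, nsmul_eq_mul, Nat.cast_ofNat]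
      _ ≤ ‖F‖ * 1 := by
          refine F.le_opNorm_of_le (norm_two_smul_sub_one_le ?_)
          exact (CStarAlgebra.inr_mem_Icc_iff_norm_le).2 ⟨he, he_norm⟩
      _ = ‖F‖ := mul_one _
  intro a
  have h_mul : ι (star a * a) = star (ι a) * ι a :=
    (Unitization.inr_mul ℂ _ _).trans (congrArg (· * ι a) (Unitization.inr_star a))
  rw [← hF, h_mul]
  exact isPositiveFunctional_of_map_one hF_one (ι a)

theorem exists_isPositiveFunctional_extension {E : Type*} [NonUnitalCStarAlgebra E]
    (ι : E →⋆ₙₐ[ℂ] A) (hι : Function.Injective ι) {φ : E →L[ℂ] ℂ} (hφ : IsPositiveFunctional φ) :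
    ∃ τ : A →L[ℂ] ℂ, IsPositiveFunctional τ ∧ (∀ x, τ (ι x) = φ x) ∧ ‖τ‖ = ‖φ‖ := by
  let _ := CStarAlgebra.spectralOrder E
  have _ := CStarAlgebra.spectralOrderedRing E
  let _ := CStarAlgebra.spectralOrder A
  have _ := CStarAlgebra.spectralOrderedRing A
  have h_unit := CStarAlgebra.increasingApproximateUnit E
  have := h_unit.neBot
  obtain ⟨τ, hτ, hτ_norm⟩ := exists_extension_norm_eq_of_linearIsometry
    ⟨(ι : E →ₗ[ℂ] A), NonUnitalStarAlgHom.norm_map ι hι⟩ φ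
  refine ⟨τ, ?_, hτ, hτ_norm⟩
  refine isPositiveFunctional_of_tendsto_norm (l := map ι (CStarAlgebra.approximateUnit E))
    (h_unit.eventually_nonneg.mono fun e he ↦ map_nonneg ι he) ?_ ?_
  · refine h_unit.eventually_norm.mono fun e he ↦ ?_
    exact (NonUnitalStarAlgHom.norm_map ι hι e).trans_le he
  · rw [tendsto_map'_iff, hτ_norm]
    exact (hφ.tendsto_norm h_unit).congr fun e ↦ (hτ e).symm

variable {B : Type*} [NonUnitalCStarAlgebra B]

/-- The pullback `A ×_{A ⧸ L} B` of the quotient map `A → A ⧸ L` along the composition of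
`π : B → A` with it. Its first projection is injective when `π b ∈ L` only for `b = 0`, which lets
functionals on `B` be extended to `A` so as to vanish on `L`. -/
def idealPullback (L : TwoSidedIdeal A) (hL : IsClosed (L : Set A)) (π : B →⋆ₙₐ[ℂ] A) :
    NonUnitalStarSubalgebra ℂ (A × B) where
  carrier := {p | p.1 - π p.2 ∈ L}
  add_mem' {p q} hp hq := by
    simpa [add_sub_add_comm] using L.add_mem hp hq
  zero_mem' := by simp [L.zero_mem]
  mul_mem' {p q} hp hq := by
    have h_split : (p * q).1 - π (p * q).2 = (p.1 - π p.2) * q.1 + π p.2 * (q.1 - π q.2) := by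
      simp only [Prod.fst_mul, Prod.snd_mul, map_mul, sub_mul, mul_sub]
      abel
    rw [Set.mem_ofPred, h_split]
    exact L.add_mem (L.mul_mem_right _ _ hp) (L.mul_mem_left _ _ hq)
  smul_mem' c p hp := by
    simpa [smul_sub] using smul_mem_of_isClosed_ideal hL c hp
  star_mem' {p} hp := by
    simpa [map_star] using star_mem_of_isClosed_ideal hL hp

theorem mem_idealPullback {L : TwoSidedIdeal A} {hL : IsClosed (L : Set A)} {π : B →⋆ₙₐ[ℂ] A}
    {p : A × B} : p ∈ idealPullback L hL π ↔ p.1 - π p.2 ∈ L :=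
  .rfl

theorem isClosed_idealPullback (L : TwoSidedIdeal A) (hL : IsClosed (L : Set A))
    (π : B →⋆ₙₐ[ℂ] A) : IsClosed (idealPullback L hL π : Set (A × B)) :=
  hL.preimage (continuous_fst.sub ((map_continuous π).comp continuous_snd))

theorem exists_isPositiveFunctional_extension_eq_zero {L : TwoSidedIdeal A}
    (hL : IsClosed (L : Set A)) (π : B →⋆ₙₐ[ℂ] A) (hπ : ∀ b, π b ∈ L → b = 0) {φ : B →L[ℂ] ℂ}
    (hφ : IsPositiveFunctional φ) :
    ∃ τ : A →L[ℂ] ℂ, IsPositiveFunctional τ ∧ (∀ b, τ (π b) = φ b) ∧ (∀ x ∈ L, τ x = 0) ∧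
      ‖τ‖ = ‖φ‖ := by
  let P := idealPullback L hL π
  have _ : IsClosed (P : Set (A × B)) := isClosed_idealPullback L hL π
  let ι : P →⋆ₙₐ[ℂ] A :=
    (NonUnitalStarAlgHom.fst ℂ A B).comp (NonUnitalStarSubalgebraClass.subtype P)
  have hι : Function.Injective ι := by
    rw [injective_iff_map_eq_zero]
    rintro ⟨⟨a, b⟩, hp⟩ (rfl : a = 0)
    have hb : b = 0 := hπ b (by simpa [P, mem_idealPullback] using L.neg_mem hp)
    exact Subtype.ext (Prod.ext rfl hb)
  let ψ : P →L[ℂ] ℂ := φ ∘L .snd ℂ A B ∘L P.toSubmodule.subtypeL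
  obtain ⟨τ, hτ, hτ_ext, hτ_norm⟩ :=
    exists_isPositiveFunctional_extension ι hι (φ := ψ) fun p ↦ hφ p.1.2
  have h_graph (b : B) : τ (π b) = φ b :=
    hτ_ext ⟨(π b, b), by simp [P, mem_idealPullback, L.zero_mem]⟩
  refine ⟨τ, hτ, h_graph, fun x hx ↦ ?_, ?_⟩
  · exact (hτ_ext ⟨(x, 0), by simpa [P, mem_idealPullback] using hx⟩).trans (map_zero φ)
  · refine (hτ_norm.trans_le ?_).antisymm ?_
    · refine ψ.opNorm_le_bound (norm_nonneg _) fun p ↦ φ.le_opNorm_of_le ?_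
      exact norm_snd_le p.1
    · refine φ.opNorm_le_bound (norm_nonneg _) fun b ↦ ?_
      rw [← h_graph]
      exact τ.le_opNorm_of_le (NonUnitalStarAlgHom.norm_apply_le π b)

end Extension

theorem stmt0_general {A : Type*} [NonUnitalCStarAlgebra A]
    (B : NonUnitalStarSubalgebra ℂ A) (hBclosed : IsClosed (B : Set A))
    (Φ : Set (↥B →L[ℂ] ℂ)) (hΦ : ∀ φ ∈ Φ, IsState φ)
    (σ : (↥B →L[ℂ] ℂ) → (A →L[ℂ] ℂ))
    (hσ : ∀ φ ∈ Φ, ∀ τ : A →L[ℂ] ℂ, IsState τ ∧ (∀ b : ↥B, τ (b : A) = φ b) ↔ τ = σ φ)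
    (hfaith : (⋂ φ ∈ Φ, Kset ⇑(σ φ)) = ({0} : Set A)) :
    EssentialIncl (B : Set A) := by
  intro L hL _ h_inter
  have h_inj (b : B) (hb : (b : A) ∈ L) : b = 0 :=
    Subtype.ext (h_inter.subset ⟨b.2, hb⟩)
  refine Set.Subset.antisymm (fun x hx ↦ ?_) (Set.singleton_subset_iff.2 L.zero_mem)
  rw [← hfaith, Set.mem_iInter₂]
  intro φ hφ y z
  obtain ⟨τ, hτ, hτ_ext, hτ_zero, hτ_norm⟩ := exists_isPositiveFunctional_extension_eq_zero hL
    (NonUnitalStarSubalgebraClass.subtype B) h_inj (hΦ φ hφ).1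
  rw [← (hσ φ hφ τ).1 ⟨⟨hτ, hτ_norm.trans (hΦ φ hφ).2⟩, hτ_ext⟩]
  exact hτ_zero _ (L.mul_mem_right _ _ (L.mul_mem_left _ _ hx))

/-- If every `φ ∈ Φ` admits a unique state extension `σ φ` to `A` and the
family `{σ φ}` is jointly essentially faithful, then the non-degenerate inclusion `B ⊆ A`
is essential. -/
theorem stmt0 {A : Type*} [NonUnitalCStarAlgebra A]
    (B : NonUnitalStarSubalgebra ℂ A) (hBclosed : IsClosed (B : Set A))
    (hnd : NondegSet (B : Set A))
    (Φ : Set (↥B →L[ℂ] ℂ)) (hΦ : ∀ φ ∈ Φ, IsState φ)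
    (σ : (↥B →L[ℂ] ℂ) → (A →L[ℂ] ℂ))
    (hσstate : ∀ φ ∈ Φ, IsState (σ φ))
    (hσext : ∀ φ ∈ Φ, ∀ b : ↥B, σ φ (b : A) = φ b)
    (hσuniq : ∀ φ ∈ Φ, ∀ τ : A →L[ℂ] ℂ, IsState τ → (∀ b : ↥B, τ (b : A) = φ b) → τ = σ φ)
    (hfaith : (⋂ φ ∈ Φ, Kset ⇑(σ φ)) = ({0} : Set A)) :
    EssentialIncl (B : Set A) :=
  stmt0_general B hBclosed Φ hΦ σ (hfaith := hfaith) fun φ hφ τ ↦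
    ⟨fun hτ ↦ hσuniq φ hφ τ hτ.1 hτ.2, fun hτ ↦ hτ ▸ ⟨hσstate φ hφ, hσext φ hφ⟩⟩
end

section
/- Let C₀(Q) ⊆ A be a central non-degenerate inclusion, E : A → C₀(Q) an essentially faithful conditional expectation, and q₀ ∈ Q. The following are equivalent: (i) for every a ∈ A, the function q ↦ p^E_q(a) is continuous at q₀; (i') there is a dense subset A₀ ⊆ A such that q ↦ p^E_q(a) is continuous at q₀ for every a ∈ A₀; (i'') there is a dense subset A₀ ⊆ A such that limsup_{q→q₀} p^E_q(a) ≤ p^E_{q₀}(a) for every a ∈ A₀; (ii) p^unif_{q₀}(a) = p^E_{q₀}(a) for every a ∈ A; (ii') there is a dense subset A₀ ⊆ A such that p^unif_{q₀}(a) = p^E_{q₀}(a) for every a ∈ A₀. -/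
open scoped ComplexOrder
open ZeroAtInfty

/-- The seminorm `p^E_q` from the GNS representation of the state `ev_q ∘ E`:
`p^E_q(a)² = sup { (ev_q∘E)(x* a* a x) / (ev_q∘E)(x* x) : (ev_q∘E)(x* x) > 0 }`
(with value `0` when the set is empty). -/
noncomputable def pE {Q : Type*} [TopologicalSpace Q]
    {A : Type*} [NonUnitalCStarAlgebra A]
    (E : A →L[ℂ] C₀(Q, ℂ)) (q : Q) (a : A) : ℝ :=
  Real.sqrt (sSup {r : ℝ | ∃ x : A, 0 < (E (star x * x) q).re ∧
    r = (E (star x * (star a * a) * x) q).re / (E (star x * x) q).re})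

/-- `p^unif_q(a) = inf {‖f a‖ : f ∈ C₀(Q), 0 ≤ f ≤ 1, f q = 1}`, the quotient seminorm of
`A / J^unif_q`. -/
noncomputable def punif {Q : Type*} [TopologicalSpace Q] [LocallyCompactSpace Q] [T2Space Q]
    {A : Type*} [NonUnitalCStarAlgebra A]
    (ι : C₀(Q, ℂ) →⋆ₙₐ[ℂ] A) (q : Q) (a : A) : ℝ :=
  sInf {r : ℝ | ∃ f : C₀(Q, ℂ), (∀ x : Q, 0 ≤ f x ∧ f x ≤ 1) ∧ f q = 1 ∧ r = ‖ι f * a‖}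

/-!
Lower semicontinuity of `q ↦ pE E q a` is automatic: `pE E q a ≤ c` is a conjunction over `x` of
inequalities between continuous functions of `q`. Since `E` is a module map, `ι f` acts in the GNS
representation of `ev_q ∘ E` as the scalar `f q`, so `pE E q (ι f * a) = ‖f q‖ * pE E q a`; and
since `E` is essentially faithful, these representations are jointly faithful, so that
`‖a‖ = sup_q pE E q a`. Multiplying `a` by a function supported near `q₀` thus turns an upper bound
for `pE E q a` near `q₀` into one for `punif ι q₀ a`, and an upper bound for `‖ι f * a‖` with
`f q₀ = 1` bounds `pE E q a` for `q` near `q₀`: upper semicontinuity at `q₀` is exactly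
`punif ι q₀ a = pE E q₀ a`. Both seminorms are continuous in `a`, so a dense set of `a` suffices.
-/

open Filter Topology UniformSpace
open scoped ENNReal InnerProductSpace CStarAlgebra

theorem upperSemicontinuousAt_iff_forall_pos_exists_mem_nhds {X : Type*} [TopologicalSpace X]
    {f : X → ℝ} {x₀ : X} :
    UpperSemicontinuousAt f x₀ ↔ ∀ ε : ℝ, 0 < ε → ∃ V ∈ 𝓝 x₀, ∀ x ∈ V, f x ≤ f x₀ + ε := by
  refine ⟨fun h ε hε ↦ ⟨_, h _ (lt_add_of_pos_right _ hε), fun _ hx ↦ le_of_lt hx⟩, fun h c hc ↦ ?_⟩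
  obtain ⟨V, hV, hle⟩ := h ((c - f x₀) / 2) (by linarith)
  filter_upwards [hV] with x hx
  linarith [hle x hx]

section JointlyFaithful

variable {A : Type*} [NonUnitalCStarAlgebra A] {I : Type*} {B : I → Type*}
  [∀ i, NonUnitalCStarAlgebra (B i)]

/-- The direct sum `a ↦ (π i a)ᵢ` of a family of ⋆-homomorphisms of C⋆-algebras, with values in the
`ℓ^∞`-sum of the targets. It turns a jointly faithful family into a single injective
⋆-homomorphism. -/
def directSumStarHom (π : ∀ i, A →⋆ₙₐ[ℂ] B i) : A →⋆ₙₐ[ℂ] lp B ∞ where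
  toFun a := ⟨fun i ↦ π i a, memℓp_infty ⟨‖a‖, by
    rintro _ ⟨i, rfl⟩
    exact NonUnitalStarAlgHom.norm_apply_le (π i) a⟩⟩
  map_smul' c a := by ext i; simp
  map_zero' := by ext i; simp
  map_add' a b := by ext i; exact map_add (π i) a b
  map_mul' a b := by ext i; simp
  map_star' a := by ext i; simp [map_star]

theorem norm_le_of_forall_norm_starHom_le (π : ∀ i, A →⋆ₙₐ[ℂ] B i)
    (hπ : ∀ a, (∀ i, π i a = 0) → a = 0) {a : A} {c : ℝ} (hc : 0 ≤ c) (ha : ∀ i, ‖π i a‖ ≤ c) :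
    ‖a‖ ≤ c := by
  have hinj : Function.Injective (directSumStarHom π) :=
    (injective_iff_map_eq_zero _).2 fun b hb ↦
      hπ b fun i ↦ congrFun (congrArg Subtype.val hb) i
  rw [← NonUnitalStarAlgHom.norm_map _ hinj a]
  exact lp.norm_le_of_forall_le hc ha

end JointlyFaithful

section GNS

variable {A : Type*} [NonUnitalCStarAlgebra A] [PartialOrder A] [StarOrderedRing A]
  (φ : A →ₚ[ℂ] ℂ)

theorem inner_gns_apply (x a y : A) :
    ⟪(φ.toPreGNS x : φ.GNS), φ.gnsNonUnitalStarAlgHom a (φ.toPreGNS y)⟫_ℂ =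
      φ (star x * a * y) := by
  simp [PositiveLinearMap.preGNS_inner_def, mul_assoc]

theorem norm_gns_le_iff (a : A) {c : ℝ} (hc : 0 ≤ c) :
    ‖φ.gnsNonUnitalStarAlgHom a‖ ≤ c ↔
      ∀ x, (φ (star x * (star a * a) * x)).re ≤ c ^ 2 * (φ (star x * x)).re := by
  have hsq (x : A) : ‖(φ.toPreGNS x : φ.GNS)‖ ^ 2 = (φ (star x * x)).re := by
    rw [Completion.norm_coe]
    exact_mod_cast congrArg Complex.re (φ.preGNS_norm_sq (φ.toPreGNS x))
  have hcoe (x : A) : ‖φ.gnsNonUnitalStarAlgHom a (φ.toPreGNS x)‖ ≤ c * ‖(φ.toPreGNS x : φ.GNS)‖ ↔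
      (φ (star x * (star a * a) * x)).re ≤ c ^ 2 * (φ (star x * x)).re := by
    have hax : φ.gnsNonUnitalStarAlgHom a (φ.toPreGNS x) = (φ.toPreGNS (a * x) : φ.GNS) := by simp
    rw [← pow_le_pow_iff_left₀ (norm_nonneg _) (by positivity) two_ne_zero, mul_pow, hax, hsq, hsq]
    simp only [star_mul, mul_assoc]
  rw [ContinuousLinearMap.opNorm_le_iff hc]
  refine ⟨fun h x ↦ (hcoe x).1 (h _), fun h v ↦ ?_⟩
  induction v using Completion.induction_on with
  | hp => exact isClosed_le (by fun_prop) (by fun_prop)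
  | ih v => exact (hcoe (φ.ofPreGNS v)).2 (h _)

theorem gns_eq_smul_one {c : A} {z : ℂ} (h : ∀ x y, φ (star x * c * y) = z * φ (star x * y)) :
    φ.gnsNonUnitalStarAlgHom c = z • 1 := by
  ext v
  refine ext_inner_left ℂ fun u ↦ ?_
  rw [smul_apply, one_apply_eq_self, inner_smul_right]
  induction u, v using Completion.induction_on₂ with
  | hp => exact isClosed_eq (by fun_prop) (by fun_prop)
  | ih u v =>
    refine (inner_gns_apply φ (φ.ofPreGNS u) c (φ.ofPreGNS v)).trans ?_
    rw [h, Completion.inner_coe, PositiveLinearMap.preGNS_inner_def]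

theorem norm_gns_eq_sqrt_sSup (a : A) :
    ‖φ.gnsNonUnitalStarAlgHom a‖ = √(sSup {r : ℝ | ∃ x : A, 0 < (φ (star x * x)).re ∧
      r = (φ (star x * (star a * a) * x)).re / (φ (star x * x)).re}) := by
  set S := {r : ℝ | ∃ x : A, 0 < (φ (star x * x)).re ∧
      r = (φ (star x * (star a * a) * x)).re / (φ (star x * x)).re}
  have hbound := (norm_gns_le_iff φ a (norm_nonneg _)).1 le_rfl
  have hS : ∀ r ∈ S, r ≤ ‖φ.gnsNonUnitalStarAlgHom a‖ ^ 2 := by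
    rintro _ ⟨x, hx, rfl⟩
    exact (div_le_iff₀ hx).2 (hbound x)
  refine le_antisymm ((norm_gns_le_iff φ a (Real.sqrt_nonneg _)).2 fun x ↦ ?_)
    ((Real.sqrt_le_left (norm_nonneg _)).2 (Real.sSup_le hS (sq_nonneg _)))
  rcases (Complex.le_def.1 (φ.map_nonneg (star_mul_self_nonneg x))).1.eq_or_lt with hx | hx
  · have hx' : (φ (star x * x)).re = 0 := hx.symm
    simpa only [hx', mul_zero] using hbound x
  · have hr := le_csSup ⟨_, hS⟩ ⟨x, hx, rfl⟩
    exact (div_le_iff₀ hx).1 (hr.trans ((Real.sqrt_le_left (Real.sqrt_nonneg _)).1 le_rfl))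

end GNS

section PeakFunctions

variable {Q : Type*} [TopologicalSpace Q]

/-- `f ∈ C₀(Q)` takes values in `[0, 1]` and equals `1` at `q`: the functions over which `punif` is
an infimum. The inequalities are in the order of `ℂ`, so they also say that `f` is real. -/
def IsPeakAt (q : Q) (f : C₀(Q, ℂ)) : Prop := (∀ x : Q, 0 ≤ f x ∧ f x ≤ 1) ∧ f q = 1

theorem IsPeakAt.norm_apply_le_one {q : Q} {f : C₀(Q, ℂ)} (hf : IsPeakAt q f) (x : Q) :
    ‖f x‖ ≤ 1 := by
  simpa using CStarAlgebra.norm_le_norm_of_nonneg_of_le (hf.1 x).1 (hf.1 x).2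

theorem IsPeakAt.norm_le_one {q : Q} {f : C₀(Q, ℂ)} (hf : IsPeakAt q f) : ‖f‖ ≤ 1 :=
  (BoundedContinuousFunction.norm_le zero_le_one).2 hf.norm_apply_le_one

variable [LocallyCompactSpace Q] [T2Space Q]

theorem exists_isPeakAt_eq_zero_off {q : Q} {V : Set Q} (hV : V ∈ 𝓝 q) :
    ∃ f : C₀(Q, ℂ), IsPeakAt q f ∧ ∀ x ∉ V, f x = 0 := by
  obtain ⟨g, hg_one, hg_zero, hg_supp, hg_mem⟩ := exists_continuous_one_zero_of_isCompact
    (isCompact_singleton (x := q)) (isOpen_interior (s := V)).isClosed_compl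
    (by simpa using mem_interior_iff_mem_nhds.2 hV)
  have hg_lim : Tendsto (fun x ↦ (g x : ℂ)) (cocompact Q) (𝓝 0) := by
    simpa using! (Complex.continuous_ofReal.tendsto 0).comp hg_supp.is_zero_at_infty
  refine ⟨⟨⟨fun x ↦ (g x : ℂ), by fun_prop⟩, hg_lim⟩, ⟨fun x ↦ ⟨?_, ?_⟩, ?_⟩, fun x hx ↦ ?_⟩
  · exact Complex.zero_le_real.2 (hg_mem x).1
  · exact Complex.real_le_real.2 (hg_mem x).2
  · simpa using! hg_one rfl
  · simpa using! hg_zero fun h ↦ hx (interior_subset h)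

theorem exists_isPeakAt (q : Q) : ∃ f : C₀(Q, ℂ), IsPeakAt q f :=
  (exists_isPeakAt_eq_zero_off (q := q) univ_mem).imp fun _ ↦ And.left

end PeakFunctions

section UniformSeminorm

variable {Q : Type*} [TopologicalSpace Q] [LocallyCompactSpace Q] [T2Space Q]
  {A : Type*} [NonUnitalCStarAlgebra A] (ι : C₀(Q, ℂ) →⋆ₙₐ[ℂ] A)

theorem punif_le {q : Q} {f : C₀(Q, ℂ)} (hf : IsPeakAt q f) (a : A) : punif ι q a ≤ ‖ι f * a‖ :=
  csInf_le ⟨0, by rintro _ ⟨g, -, -, rfl⟩; exact norm_nonneg _⟩ ⟨f, hf.1, hf.2, rfl⟩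

theorem le_punif {q : Q} {a : A} {c : ℝ} (h : ∀ f, IsPeakAt q f → c ≤ ‖ι f * a‖) :
    c ≤ punif ι q a := by
  obtain ⟨g, hg⟩ := exists_isPeakAt q
  refine le_csInf ⟨_, g, hg.1, hg.2, rfl⟩ ?_
  rintro _ ⟨f, hf_mem, hf_one, rfl⟩
  exact h f ⟨hf_mem, hf_one⟩

theorem exists_norm_mul_lt_of_punif_lt {q : Q} {a : A} {c : ℝ} (h : punif ι q a < c) :
    ∃ f, IsPeakAt q f ∧ ‖ι f * a‖ < c := by
  contrapose! h
  exact le_punif ι h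

theorem punif_le_punif_add_norm_sub (q : Q) (a b : A) :
    punif ι q a ≤ punif ι q b + ‖a - b‖ := by
  refine sub_le_iff_le_add.1 (le_punif ι fun f hf ↦ sub_le_iff_le_add.2 ?_)
  have hιf : ‖ι f‖ ≤ 1 := (NonUnitalStarAlgHom.norm_apply_le ι f).trans hf.norm_le_one
  calc punif ι q a ≤ ‖ι f * b + ι f * (a - b)‖ := by
        rw [← mul_add, add_sub_cancel]
        exact punif_le ι hf a
    _ ≤ ‖ι f * b‖ + ‖ι f‖ * ‖a - b‖ := norm_add_le_of_le le_rfl (norm_mul_le _ _)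
    _ ≤ ‖ι f * b‖ + ‖a - b‖ := by gcongr; exact mul_le_of_le_one_left (norm_nonneg _) hιf

theorem continuous_punif (q : Q) : Continuous (punif ι q) :=
  (LipschitzWith.of_le_add fun a b ↦ by
    simpa only [dist_eq_norm] using punif_le_punif_add_norm_sub ι q a b).continuous

end UniformSeminorm

section ModuleMap

variable {Q : Type*} [TopologicalSpace Q] [LocallyCompactSpace Q] [T2Space Q]
  {A : Type*} [NonUnitalCStarAlgebra A] {ι : C₀(Q, ℂ) →⋆ₙₐ[ℂ] A} {E : A →L[ℂ] C₀(Q, ℂ)}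

theorem map_mul_of_bimodule (hmod : ∀ f₁ f₂ a, E (ι f₁ * a * ι f₂) = f₁ * E a * f₂)
    (f : C₀(Q, ℂ)) (a : A) : E (ι f * a) = f * E a := by
  ext q
  obtain ⟨g, -, hg⟩ := exists_isPeakAt q
  have h : g * E (ι f * a) * g = g * f * E a * g := by
    rw [← hmod g g, ← hmod (g * f) g, map_mul ι, ← mul_assoc (ι g)]
  simpa [hg] using DFunLike.congr_fun h q

theorem eq_zero_of_forall_sandwich_eq_zero
    (hmod : ∀ f₁ f₂ a, E (ι f₁ * a * ι f₂) = f₁ * E a * f₂) {q : Q} {a : A}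
    (h : ∀ x y, E (star x * a * y) q = 0) : E a q = 0 := by
  obtain ⟨g, -, hg⟩ := exists_isPeakAt q
  simpa [← map_star, hmod, hg] using h (ι (star g)) (ι g)

end ModuleMap

section GNSSeminorm

variable {Q : Type*} [TopologicalSpace Q]
  {A : Type*} [NonUnitalCStarAlgebra A]

theorem pE_nonneg (E : A →L[ℂ] C₀(Q, ℂ)) (q : Q) (a : A) : 0 ≤ pE E q a := Real.sqrt_nonneg _

variable [PartialOrder A] [StarOrderedRing A] {E : A →L[ℂ] C₀(Q, ℂ)}

/-- The positive functional `ev_q ∘ E` attached to a positive map `E : A → C₀(Q)`. -/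
noncomputable def evalFunctional (hpos : ∀ a : A, 0 ≤ a → ∀ q, 0 ≤ E a q) (q : Q) : A →ₚ[ℂ] ℂ :=
  PositiveLinearMap.mk₀
    { toFun a := E a q
      map_add' := by simp
      map_smul' := by simp } fun a ha ↦ hpos a ha q

/-- The GNS representation of `ev_q ∘ E`, whose operator norm is `pE E q`. -/
noncomputable def evalRep (hpos : ∀ a : A, 0 ≤ a → ∀ q, 0 ≤ E a q) (q : Q) :
    A →⋆ₙₐ[ℂ] ((evalFunctional hpos q).GNS →L[ℂ] (evalFunctional hpos q).GNS) :=
  (evalFunctional hpos q).gnsNonUnitalStarAlgHom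

theorem pE_eq_norm_evalRep (hpos : ∀ a : A, 0 ≤ a → ∀ q, 0 ≤ E a q) (q : Q) (a : A) :
    pE E q a = ‖evalRep hpos q a‖ :=
  (norm_gns_eq_sqrt_sSup (evalFunctional hpos q) a).symm

theorem pE_le_norm (hpos : ∀ a : A, 0 ≤ a → ∀ q, 0 ≤ E a q) (q : Q) (a : A) : pE E q a ≤ ‖a‖ := by
  rw [pE_eq_norm_evalRep hpos]
  exact NonUnitalStarAlgHom.norm_apply_le _ a

theorem continuous_pE (hpos : ∀ a : A, 0 ≤ a → ∀ q, 0 ≤ E a q) (q : Q) : Continuous (pE E q) := by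
  rw [funext (pE_eq_norm_evalRep hpos q)]
  exact (map_continuous (evalRep hpos q)).norm

theorem lowerSemicontinuous_pE (hpos : ∀ a : A, 0 ≤ a → ∀ q, 0 ≤ E a q) (a : A) :
    LowerSemicontinuous fun q ↦ pE E q a := by
  refine lowerSemicontinuous_iff_isClosed_preimage.2 fun c ↦ ?_
  have hcont (b : A) : Continuous fun q ↦ (E b q).re :=
    Complex.continuous_re.comp (map_continuous (E b))
  rcases lt_or_ge c 0 with hc | hc
  · convert isClosed_empty
    exact Set.eq_empty_of_forall_notMem fun q hq ↦ (hc.trans_le (pE_nonneg E q a)).not_ge hq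
  · have h : (fun q ↦ pE E q a) ⁻¹' Set.Iic c = ⋂ x : A,
        {q | (E (star x * (star a * a) * x) q).re ≤ c ^ 2 * (E (star x * x) q).re} := by
      ext q
      rw [Set.mem_preimage, Set.mem_Iic, Set.mem_iInter, pE_eq_norm_evalRep hpos]
      exact norm_gns_le_iff (evalFunctional hpos q) a hc
    rw [h]
    exact isClosed_iInter fun x ↦ isClosed_le (hcont _) (continuous_const.mul (hcont _))

theorem continuousAt_pE_iff_upperSemicontinuousAt
    (hpos : ∀ a : A, 0 ≤ a → ∀ q, 0 ≤ E a q) (q₀ : Q) (a : A) :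
    ContinuousAt (fun q ↦ pE E q a) q₀ ↔ UpperSemicontinuousAt (fun q ↦ pE E q a) q₀ := by
  rw [continuousAt_iff_lower_upperSemicontinuousAt,
    and_iff_right (lowerSemicontinuous_pE hpos a q₀)]

end GNSSeminorm

section EssentiallyFaithful

/-- `E` is essentially faithful: its kernel contains no nonzero closed two-sided ideal. -/
def IsEssentiallyFaithful {Q : Type*} [TopologicalSpace Q] {A : Type*} [NonUnitalCStarAlgebra A]
    (E : A →L[ℂ] C₀(Q, ℂ)) : Prop :=
  ∀ L : TwoSidedIdeal A, IsClosed (L : Set A) → (∀ x ∈ L, E x = 0) → (L : Set A) = {0}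

variable {Q : Type*} [TopologicalSpace Q] [LocallyCompactSpace Q] [T2Space Q]
  {A : Type*} [NonUnitalCStarAlgebra A] [PartialOrder A] [StarOrderedRing A]
  {ι : C₀(Q, ℂ) →⋆ₙₐ[ℂ] A} {E : A →L[ℂ] C₀(Q, ℂ)}

theorem evalRep_map_eq_smul_one (hcentral : ∀ f a, ι f * a = a * ι f)
    (hmod : ∀ f₁ f₂ a, E (ι f₁ * a * ι f₂) = f₁ * E a * f₂)
    (hpos : ∀ a : A, 0 ≤ a → ∀ q, 0 ≤ E a q) (q : Q) (f : C₀(Q, ℂ)) :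
    evalRep hpos q (ι f) = f q • 1 := by
  refine gns_eq_smul_one _ fun x y ↦ ?_
  change E (star x * ι f * y) q = f q * E (star x * y) q
  rw [← hcentral, mul_assoc, map_mul_of_bimodule hmod, ZeroAtInftyContinuousMap.mul_apply]

theorem pE_map_mul (hcentral : ∀ f a, ι f * a = a * ι f)
    (hmod : ∀ f₁ f₂ a, E (ι f₁ * a * ι f₂) = f₁ * E a * f₂)
    (hpos : ∀ a : A, 0 ≤ a → ∀ q, 0 ≤ E a q) (q : Q) (f : C₀(Q, ℂ)) (a : A) :
    pE E q (ι f * a) = ‖f q‖ * pE E q a := by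
  rw [pE_eq_norm_evalRep hpos, pE_eq_norm_evalRep hpos, map_mul,
    evalRep_map_eq_smul_one hcentral hmod, smul_one_mul, norm_smul]

theorem pE_le_punif (hcentral : ∀ f a, ι f * a = a * ι f)
    (hmod : ∀ f₁ f₂ a, E (ι f₁ * a * ι f₂) = f₁ * E a * f₂)
    (hpos : ∀ a : A, 0 ≤ a → ∀ q, 0 ≤ E a q) (q : Q) (a : A) :
    pE E q a ≤ punif ι q a :=
  le_punif ι fun f hf ↦ by
    simpa [pE_map_mul hcentral hmod hpos, hf.2] using pE_le_norm hpos q (ι f * a)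

theorem eq_zero_of_forall_evalRep_eq_zero
    (hmod : ∀ f₁ f₂ a, E (ι f₁ * a * ι f₂) = f₁ * E a * f₂)
    (hpos : ∀ a : A, 0 ≤ a → ∀ q, 0 ≤ E a q)
    (hfaithful : IsEssentiallyFaithful E) {a : A} (ha : ∀ q, evalRep hpos q a = 0) : a = 0 := by
  set L : TwoSidedIdeal A := ⨅ q, TwoSidedIdeal.ker (evalRep hpos q)
  have hL (x : A) : x ∈ L ↔ ∀ q, evalRep hpos q x = 0 := by
    simp only [L, TwoSidedIdeal.mem_iInf, TwoSidedIdeal.mem_ker]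
  have hclosed : IsClosed (L : Set A) := by
    have hinter : (L : Set A) = ⋂ q, evalRep hpos q ⁻¹' {0} := by
      ext x
      simpa using hL x
    rw [hinter]
    exact isClosed_iInter fun q ↦ isClosed_singleton.preimage (map_continuous _)
  have hker : ∀ x ∈ L, E x = 0 := fun x hx ↦ by
    ext q
    refine eq_zero_of_forall_sandwich_eq_zero hmod fun y z ↦ ?_
    refine (inner_gns_apply (evalFunctional hpos q) y x z).symm.trans ?_
    rw [← evalRep, (hL x).1 hx q, zero_apply, inner_zero_right]
  exact (hfaithful L hclosed hker).subset ((hL a).2 ha)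

theorem norm_le_of_forall_pE_le
    (hmod : ∀ f₁ f₂ a, E (ι f₁ * a * ι f₂) = f₁ * E a * f₂)
    (hpos : ∀ a : A, 0 ≤ a → ∀ q, 0 ≤ E a q)
    (hfaithful : IsEssentiallyFaithful E) {a : A} {c : ℝ}
    (hc : 0 ≤ c) (ha : ∀ q, pE E q a ≤ c) : ‖a‖ ≤ c :=
  norm_le_of_forall_norm_starHom_le (evalRep hpos)
    (fun _ ↦ eq_zero_of_forall_evalRep_eq_zero hmod hpos hfaithful) hc
    fun q ↦ pE_eq_norm_evalRep hpos q a ▸ ha q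

theorem punif_le_pE_of_upperSemicontinuousAt (hcentral : ∀ f a, ι f * a = a * ι f)
    (hmod : ∀ f₁ f₂ a, E (ι f₁ * a * ι f₂) = f₁ * E a * f₂)
    (hpos : ∀ a : A, 0 ≤ a → ∀ q, 0 ≤ E a q) (hfaithful : IsEssentiallyFaithful E)
    {q₀ : Q} {a : A} (h : UpperSemicontinuousAt (fun q ↦ pE E q a) q₀) :
    punif ι q₀ a ≤ pE E q₀ a := by
  refine le_of_forall_gt_imp_ge_of_dense fun c hc ↦ ?_
  have hc0 : 0 ≤ c := (pE_nonneg E q₀ a).trans hc.le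
  obtain ⟨f, hf, hf_zero⟩ := exists_isPeakAt_eq_zero_off (h c hc)
  refine (punif_le ι hf a).trans (norm_le_of_forall_pE_le hmod hpos hfaithful hc0 fun q ↦ ?_)
  rw [pE_map_mul hcentral hmod hpos]
  by_cases hq : pE E q a < c
  · exact (mul_le_of_le_one_left (pE_nonneg E q a) (hf.norm_apply_le_one q)).trans hq.le
  · rwa [hf_zero q hq, norm_zero, zero_mul]

theorem upperSemicontinuousAt_pE_of_punif_le (hcentral : ∀ f a, ι f * a = a * ι f)
    (hmod : ∀ f₁ f₂ a, E (ι f₁ * a * ι f₂) = f₁ * E a * f₂)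
    (hpos : ∀ a : A, 0 ≤ a → ∀ q, 0 ≤ E a q) {q₀ : Q} {a : A}
    (h : punif ι q₀ a ≤ pE E q₀ a) : UpperSemicontinuousAt (fun q ↦ pE E q a) q₀ := by
  intro c hc
  obtain ⟨f, hf, hfa⟩ := exists_norm_mul_lt_of_punif_lt ι (h.trans_lt hc)
  have hcont : Continuous fun q ↦ ‖f q‖ * c := (map_continuous f).norm.mul continuous_const
  have hnear : ∀ᶠ q in 𝓝 q₀, ‖ι f * a‖ < ‖f q‖ * c :=
    hcont.continuousAt.eventually_const_lt (by simpa [hf.2] using hfa)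
  filter_upwards [hnear] with q hq
  have hle : ‖f q‖ * pE E q a ≤ ‖ι f * a‖ :=
    pE_map_mul hcentral hmod hpos q f a ▸ pE_le_norm hpos q (ι f * a)
  exact lt_of_mul_lt_mul_left (hle.trans_lt hq) (norm_nonneg _)

theorem punif_eq_pE_iff_upperSemicontinuousAt (hcentral : ∀ f a, ι f * a = a * ι f)
    (hmod : ∀ f₁ f₂ a, E (ι f₁ * a * ι f₂) = f₁ * E a * f₂)
    (hpos : ∀ a : A, 0 ≤ a → ∀ q, 0 ≤ E a q)
    (hfaithful : IsEssentiallyFaithful E) (q₀ : Q) (a : A) :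
    punif ι q₀ a = pE E q₀ a ↔ UpperSemicontinuousAt (fun q ↦ pE E q a) q₀ :=
  ⟨fun h ↦ upperSemicontinuousAt_pE_of_punif_le hcentral hmod hpos h.le, fun h ↦
    (punif_le_pE_of_upperSemicontinuousAt hcentral hmod hpos hfaithful h).antisymm
      (pE_le_punif hcentral hmod hpos q₀ a)⟩

theorem exists_dense_punif_eq_pE_iff (ι : C₀(Q, ℂ) →⋆ₙₐ[ℂ] A)
    (hpos : ∀ a : A, 0 ≤ a → ∀ q, 0 ≤ E a q) (q₀ : Q) :
    (∃ A₀ : Set A, Dense A₀ ∧ ∀ a ∈ A₀, punif ι q₀ a = pE E q₀ a) ↔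
      ∀ a, punif ι q₀ a = pE E q₀ a :=
  ⟨fun ⟨_, hdense, h⟩ ↦
    congrFun ((continuous_punif ι q₀).ext_on hdense (continuous_pE hpos q₀) h),
    fun h ↦ ⟨Set.univ, dense_univ, fun a _ ↦ h a⟩⟩

end EssentiallyFaithful

theorem stmt12_general {Q : Type*} [TopologicalSpace Q] [LocallyCompactSpace Q] [T2Space Q]
    {A : Type*} [NonUnitalCStarAlgebra A] [PartialOrder A] [StarOrderedRing A]
    (ι : C₀(Q, ℂ) →⋆ₙₐ[ℂ] A) (hcentral : ∀ (f : C₀(Q, ℂ)) (a : A), ι f * a = a * ι f)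
    (E : A →L[ℂ] C₀(Q, ℂ))
    (hEmod : ∀ (f₁ f₂ : C₀(Q, ℂ)) (a : A), E (ι f₁ * a * ι f₂) = f₁ * E a * f₂)
    (hEpos : ∀ a : A, 0 ≤ a → ∀ q : Q, 0 ≤ E a q)
    (hEessfaithful : IsEssentiallyFaithful E) (q₀ : Q) :
    List.TFAE [
      ∀ a : A, ContinuousAt (fun q : Q ↦ pE E q a) q₀,
      ∃ A₀ : Set A, Dense A₀ ∧ ∀ a ∈ A₀, ContinuousAt (fun q : Q ↦ pE E q a) q₀,
      ∃ A₀ : Set A, Dense A₀ ∧ ∀ a ∈ A₀, ∀ ε : ℝ, 0 < ε →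
        ∃ V ∈ 𝓝 q₀, ∀ q ∈ V, pE E q a ≤ pE E q₀ a + ε,
      ∀ a : A, punif ι q₀ a = pE E q₀ a,
      ∃ A₀ : Set A, Dense A₀ ∧ ∀ a ∈ A₀, punif ι q₀ a = pE E q₀ a] := by
  have husc := punif_eq_pE_iff_upperSemicontinuousAt hcentral hEmod hEpos hEessfaithful q₀
  simp only [continuousAt_pE_iff_upperSemicontinuousAt hEpos,
    ← upperSemicontinuousAt_iff_forall_pos_exists_mem_nhds (f := fun q ↦ pE E q _), ← husc,
    exists_dense_punif_eq_pE_iff ι hEpos]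
  simp only [List.tfae_cons_cons, List.tfae_singleton, and_true, iff_self]

/-- For a central non-degenerate inclusion `C₀(Q) ⊆ A`, an essentially
faithful conditional expectation `E : A → C₀(Q)` and `q₀ ∈ Q`, the following are equivalent:
(i) `q ↦ p^E_q(a)` is continuous at `q₀` for all `a`;
(i') the same for all `a` in some dense subset;
(i'') `limsup_{q→q₀} p^E_q(a) ≤ p^E_{q₀}(a)` for all `a` in some dense subset;
(ii) `p^unif_{q₀} = p^E_{q₀}` on `A`;
(ii') `p^unif_{q₀} = p^E_{q₀}` on some dense subset. -/
theorem stmt12 {Q : Type*} [TopologicalSpace Q] [LocallyCompactSpace Q] [T2Space Q]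
    {A : Type*} [NonUnitalCStarAlgebra A] [PartialOrder A] [StarOrderedRing A]
    (ι : C₀(Q, ℂ) →⋆ₙₐ[ℂ] A) (hisom : Isometry ι)
    (hcentral : ∀ (f : C₀(Q, ℂ)) (a : A), ι f * a = a * ι f)
    (hnondeg : closure
      (Submodule.span ℂ {x : A | ∃ (f : C₀(Q, ℂ)) (a : A), x = ι f * a} : Set A) = Set.univ)
    (E : A →L[ℂ] C₀(Q, ℂ))
    (hEnorm : ‖E‖ = 1)
    (hEproj : ∀ f : C₀(Q, ℂ), E (ι f) = f)
    (hEmod : ∀ (f₁ f₂ : C₀(Q, ℂ)) (a : A), E (ι f₁ * a * ι f₂) = f₁ * E a * f₂)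
    (hEpos : ∀ a : A, 0 ≤ a → ∀ q : Q, 0 ≤ E a q)
    (hEessfaithful : ∀ L : TwoSidedIdeal A, IsClosed (L : Set A) →
      (∀ x ∈ L, E x = 0) → (L : Set A) = {0})
    (q₀ : Q) :
    ((∀ a : A, ContinuousAt (fun q : Q => pE E q a) q₀) ↔
      (∃ A₀ : Set A, Dense A₀ ∧ ∀ a ∈ A₀, ContinuousAt (fun q : Q => pE E q a) q₀)) ∧
    ((∀ a : A, ContinuousAt (fun q : Q => pE E q a) q₀) ↔
      (∃ A₀ : Set A, Dense A₀ ∧ ∀ a ∈ A₀, ∀ ε : ℝ, 0 < ε →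
        ∃ V ∈ nhds q₀, ∀ q ∈ V, pE E q a ≤ pE E q₀ a + ε)) ∧
    ((∀ a : A, ContinuousAt (fun q : Q => pE E q a) q₀) ↔
      (∀ a : A, punif ι q₀ a = pE E q₀ a)) ∧
    ((∀ a : A, ContinuousAt (fun q : Q => pE E q a) q₀) ↔
      (∃ A₀ : Set A, Dense A₀ ∧ ∀ a ∈ A₀, punif ι q₀ a = pE E q₀ a)) := by
  have h := stmt12_general ι hcentral E hEmod hEpos hEessfaithful q₀
  exact ⟨h.out 0 1, h.out 0 2, h.out 0 3, h.out 0 4⟩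
end
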